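/- Let P^{(1)},…,P^{(n)} be n probability distributions on X × Y (independently sampled, not necessarily identical), and draw from each P^{(j)} an i.i.d. sample S_{P^{(j)}} of m points, the n samples being mutually independent. Then with confidence at least 1 − δ, simultaneously for all f ∈ F: (1/n) Σ_{j=1}^n L_{P^{(j)}}(f) ≤ (1/n) Σ_{j=1}^n L̂_{P^{(j)}}(f) + 2·R_{mn}(F) + 3·√(ln(2/δ)/(2mn)). -/

import Mathlib

open MeasureTheory Real Filter

noncomputable section

/-- The output space `Y = {1, -1}`, as a subtype of the integers. -/
abbrev Ysp : Type := ({1, -1} : Set ℤ)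

/-- The risk `L_P(f) = E_{(x,y) ~ P}[ℓ(f(x), y)]` of a decision function `f`
under a distribution `P` on `X × Y`. -/
def risk {X : Type*} [MeasurableSpace X] (ℓ : Ysp → Ysp → ℝ)
    (P : Measure (X × Ysp)) (f : X → Ysp) : ℝ :=
  ∫ p, ℓ (f p.1) p.2 ∂P

/-- The population risk `L^μ(f) = E_{P ~ μ}[L_P(f)]` under a meta-distribution `μ`. -/
def metaRisk {X : Type*} [MeasurableSpace X] (ℓ : Ysp → Ysp → ℝ)
    (μ : Measure (Measure (X × Ysp))) (f : X → Ysp) : ℝ :=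
  ∫ P, risk ℓ P f ∂μ

/-- Interpret a boolean as a random sign in `{-1, +1}`. -/
def sgn (b : Bool) : ℝ := if b then 1 else -1

/-- Empirical Rademacher complexity of the class `F` on the sample `S`:
the expectation, over i.i.d. uniform random signs `σ`, of
`sup_{f ∈ F} (1/N) ∑ₖ σₖ ℓ(f(xₖ), yₖ)` where `N` is the sample size. -/
def rad {X : Type*} [MeasurableSpace X] (ℓ : Ysp → Ysp → ℝ) (F : Set (X → Ysp))
    {ι : Type*} [Fintype ι] [DecidableEq ι] (S : ι → X × Ysp) : ℝ :=
  (∑ σ : ι → Bool, ⨆ f ∈ F,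
      (Fintype.card ι : ℝ)⁻¹ * ∑ k, sgn (σ k) * ℓ (f (S k).1) (S k).2) /
    2 ^ Fintype.card ι

/-- Domain-level Rademacher average of `F` on the domains `P 0, …, P (n-1)`:
the expectation, over i.i.d. uniform random signs `σ`, of
`sup_{f ∈ F} (1/n) ∑ⱼ σⱼ L_{P⁽ʲ⁾}(f)`. -/
def radDom {X : Type*} [MeasurableSpace X] (ℓ : Ysp → Ysp → ℝ) (F : Set (X → Ysp))
    {n : ℕ} (P : Fin n → Measure (X × Ysp)) : ℝ :=
  (∑ σ : Fin n → Bool, ⨆ f ∈ F,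
      (n : ℝ)⁻¹ * ∑ j, sgn (σ j) * risk ℓ (P j) f) / 2 ^ n


lemma mp_integral {α β : Type*} [MeasurableSpace α] [MeasurableSpace β] {μ : Measure α}
    {ν : Measure β} {f : α → β} (hf : MeasurePreserving f μ ν) {g : β → ℝ} (hg : Measurable g) :
    ∫ x, g (f x) ∂μ = ∫ y, g y ∂ν := by
  rw [← hf.map_eq, integral_map hf.measurable.aemeasurable hg.aestronglyMeasurable]

lemma bdd_integrable {α : Type*} [MeasurableSpace α] {μ : Measure α} [IsFiniteMeasure μ]
    {g : α → ℝ} (hg : Measurable g) (B : ℝ) (hB : ∀ x, |g x| ≤ B) : Integrable g μ :=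
  Integrable.of_bound hg.aestronglyMeasurable B (ae_of_all _ hB)

lemma hoeff {α : Type*} [MeasurableSpace α] (μ : Measure α) [IsProbabilityMeasure μ]
    {h : α → ℝ} (hh : Measurable h) (c : ℝ) (hc : ∀ x y, |h x - h y| ≤ c) (s : ℝ) :
    ∫ x, exp (s * (h x - ∫ y, h y ∂μ)) ∂μ ≤ exp (s ^ 2 * c ^ 2 / 8) := by
  obtain ⟨x0⟩ : Nonempty α := μ.nonempty_of_neZero
  have c0 : 0 ≤ c := (abs_nonneg _).trans (hc x0 x0)
  have hbb : BddBelow (Set.range h) := ⟨h x0 - c, by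
    rintro _ ⟨y, rfl⟩
    have := (abs_le.1 (hc x0 y)).2
    linarith⟩
  have hne : Nonempty α := ⟨x0⟩
  have hmem : ∀ x, h x ∈ Set.Icc (⨅ y, h y) ((⨅ y, h y) + c) := fun x => by
    refine ⟨ciInf_le hbb x, ?_⟩
    have : h x - c ≤ ⨅ y, h y := le_ciInf fun y => by
      have := (abs_le.1 (hc x y)).2
      linarith
    linarith
  have := (ProbabilityTheory.hasSubgaussianMGF_of_mem_Icc (μ := μ) hh.aemeasurable
    (ae_of_all _ hmem)).mgf_le s
  refine this.trans (le_of_eq ?_)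
  congr 1
  push_cast
  rw [add_sub_cancel_left, Real.norm_eq_abs, abs_of_nonneg c0]
  ring

lemma mcd_fin {Z : Type*} [MeasurableSpace Z] (c s : ℝ) (k : ℕ) :
    ∀ (ν : Fin k → Measure Z) [∀ i, IsProbabilityMeasure (ν i)] (g : (Fin k → Z) → ℝ)
      (_ : Measurable g) (B : ℝ) (_ : ∀ S, |g S| ≤ B)
      (_ : ∀ S i z, |g (Function.update S i z) - g S| ≤ c),
    ∫ S, exp (s * (g S - ∫ T, g T ∂Measure.pi ν)) ∂Measure.pi ν
      ≤ exp (s ^ 2 * c ^ 2 * k / 8) := by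
  induction k with
  | zero =>
    intro ν _ g hg B hB hc
    have h0 : ∀ S, g S = g default := fun S => by rw [Subsingleton.elim S default]
    simp [h0]
  | succ k ih =>
    intro ν _ g hg B hB hc
    set pik := Measure.pi fun j : Fin k => ν j.succ with hpik
    have hmc : Measurable (fun p : Z × (Fin k → Z) => (Fin.cons p.1 p.2 : Fin (k+1) → Z)) := by
      refine measurable_pi_iff.2 fun i => ?_
      refine Fin.cases ?_ (fun j => ?_) i
      · simpa using measurable_fst
      · simp only [Fin.cons_succ]; fun_prop
    have hmp : MeasurePreserving (fun p : Z × (Fin k → Z) => (Fin.cons p.1 p.2 : Fin (k+1) → Z))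
        ((ν 0).prod pik) (Measure.pi ν) := by
      have h1 := (measurePreserving_piFinSuccAbove (α := fun _ => Z) ν 0).symm
      have h0 : (fun p : Z × (Fin k → Z) => (Fin.cons p.1 p.2 : Fin (k+1) → Z))
          = (MeasurableEquiv.piFinSuccAbove (fun _ => Z) 0).symm := by
        ext p : 1
        exact (Fin.insertNth_zero' p.1 p.2).symm
      rw [h0]
      exact h1
    have hmg : Measurable (fun p : Z × (Fin k → Z) => g (Fin.cons p.1 p.2)) := hg.comp hmc
    set h : Z → ℝ := fun z => ∫ w, g (Fin.cons z w) ∂pik with hh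
    have hhm : Measurable h :=
      (StronglyMeasurable.integral_prod_right (ν := pik) hmg.stronglyMeasurable).measurable
    have hgz : ∀ z, Measurable fun w : Fin k → Z => g (Fin.cons z w) := fun z =>
      hmg.comp measurable_prodMk_left
    have hhB : ∀ z, |h z| ≤ B := fun z => by
      have := norm_integral_le_of_norm_le_const (μ := pik) (f := fun w => g (Fin.cons z w)) (C := B)
        (ae_of_all _ fun w => hB (Fin.cons z w))
      simpa using this
    have hhc : ∀ x y, |h x - h y| ≤ c := fun x y => by
      rw [hh]
      simp only
      rw [← integral_sub (bdd_integrable (hgz x) B fun _ => hB _)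
        (bdd_integrable (hgz y) B fun _ => hB _)]
      have := norm_integral_le_of_norm_le_const (μ := pik)
        (f := fun w => g (Fin.cons x w) - g (Fin.cons y w)) (C := c) (ae_of_all _ fun w => by
          have := hc (Fin.cons y w) 0 x
          rwa [Fin.update_cons_zero] at this)
      simpa using this
    have hEg : ∫ T, g T ∂Measure.pi ν = ∫ z, h z ∂ν 0 := by
      rw [← mp_integral hmp hg, integral_prod _ (bdd_integrable hmg B fun _ => hB _)]
    set M := ∫ z, h z ∂ν 0 with hM
    have hin : ∀ z, ∫ w, exp (s * (g (Fin.cons z w) - h z)) ∂pik ≤ exp (s ^ 2 * c ^ 2 * k / 8) :=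
      fun z => ih (fun j => ν j.succ) (fun w => g (Fin.cons z w)) (hgz z) B (fun _ => hB _)
        fun w i y => by
          have := hc (Fin.cons z w) i.succ y
          rwa [← Fin.cons_update] at this
    have hexpB : ∀ x, |x| ≤ B → |exp (s * (x - M))| ≤ exp (|s| * (B + |M|)) := fun x hx => by
      rw [abs_of_pos (exp_pos _)]
      apply exp_le_exp.2
      refine (le_abs_self _).trans ?_
      rw [abs_mul]
      gcongr
      exact (abs_sub _ _).trans (by gcongr)
    rw [hEg, ← mp_integral hmp (g := fun S => exp (s * (g S - M))) (by fun_prop),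
      integral_prod _ (bdd_integrable (by fun_prop) (exp (|s| * (B + |M|)))
        fun p => hexpB _ (hB _))]
    have key : ∀ z, ∫ w, exp (s * (g (Fin.cons z w) - M)) ∂pik
        ≤ exp (s * (h z - M)) * exp (s ^ 2 * c ^ 2 * k / 8) := fun z => by
      have : ∀ w, exp (s * (g (Fin.cons z w) - M))
          = exp (s * (h z - M)) * exp (s * (g (Fin.cons z w) - h z)) := fun w => by
        rw [← exp_add]; ring_nf
      simp_rw [this]
      rw [integral_const_mul]
      exact mul_le_mul_of_nonneg_left (hin z) (exp_pos _).le
    have hi2 : Integrable (fun z => exp (s * (h z - M))) (ν 0) :=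
      bdd_integrable (by fun_prop) (exp (|s| * (B + |M|))) fun p => hexpB _ (hhB _)
    calc _ ≤ ∫ z, exp (s * (h z - M)) * exp (s ^ 2 * c ^ 2 * k / 8) ∂ν 0 := by
          refine integral_mono_of_nonneg (ae_of_all _ fun z => integral_nonneg fun w =>
            (exp_pos _).le) (hi2.mul_const _) (ae_of_all _ key)
      _ = (∫ z, exp (s * (h z - M)) ∂ν 0) * exp (s ^ 2 * c ^ 2 * k / 8) := integral_mul_const _ _
      _ ≤ exp (s ^ 2 * c ^ 2 / 8) * exp (s ^ 2 * c ^ 2 * k / 8) := by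
          gcongr
          exact hoeff (ν 0) hhm c hhc s
      _ = _ := by
          rw [← exp_add]; push_cast; ring_nf

lemma mcd {ι Z : Type*} [Fintype ι] [DecidableEq ι] [MeasurableSpace Z] (c s : ℝ)
    (ν : ι → Measure Z) [∀ i, IsProbabilityMeasure (ν i)] (g : (ι → Z) → ℝ)
    (hg : Measurable g) (B : ℝ) (hB : ∀ S, |g S| ≤ B)
    (hc : ∀ S i z, |g (Function.update S i z) - g S| ≤ c) :
    ∫ S, exp (s * (g S - ∫ T, g T ∂Measure.pi ν)) ∂Measure.pi ν
      ≤ exp (s ^ 2 * c ^ 2 * Fintype.card ι / 8) := by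
  let e : Fin (Fintype.card ι) ≃ ι := (Fintype.equivFin ι).symm
  have hmp : MeasurePreserving (fun (T : Fin (Fintype.card ι) → Z) i => T (e.symm i))
      (Measure.pi fun i => ν (e i)) (Measure.pi ν) := by
    convert measurePreserving_piCongrLeft (α := fun _ => Z) ν e using 1
    ext T i
    obtain ⟨j, rfl⟩ := e.surjective i
    simp [MeasurableEquiv.coe_piCongrLeft]
  have h := mcd_fin c s (Fintype.card ι) (fun i => ν (e i)) (fun T => g (fun i => T (e.symm i)))
    (hg.comp hmp.measurable) B (fun _ => hB _) (fun S i z => by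
      have := hc (fun i => S (e.symm i)) (e i) z
      convert this using 4
      ext j
      simp [Function.update_apply, Equiv.symm_apply_eq])
  rw [mp_integral hmp hg, mp_integral hmp (g := fun S => exp (s * (g S - ∫ T, g T ∂Measure.pi ν)))
    (by fun_prop)] at h
  exact h

lemma mcd_tail {ι Z : Type*} [Fintype ι] [DecidableEq ι] [MeasurableSpace Z] (c t : ℝ)
    (hN : 0 < Fintype.card ι) (hc0 : 0 < c) (ht : 0 ≤ t)
    (ν : ι → Measure Z) [∀ i, IsProbabilityMeasure (ν i)] (g : (ι → Z) → ℝ)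
    (hg : Measurable g) (B : ℝ) (hB : ∀ S, |g S| ≤ B)
    (hc : ∀ S i z, |g (Function.update S i z) - g S| ≤ c)
    (hE : ∫ T, g T ∂Measure.pi ν ≤ 0) :
    (Measure.pi ν).real {S | t ≤ g S} ≤ exp (- 2 * t ^ 2 / (c ^ 2 * Fintype.card ι)) := by
  have hN' : (0 : ℝ) < Fintype.card ι := by exact_mod_cast hN
  set s := 4 * t / (c ^ 2 * Fintype.card ι) with hs
  have hs0 : 0 ≤ s := by positivity
  set M := ∫ T, g T ∂Measure.pi ν with hM
  have h1 := mcd c s ν g hg B hB hc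
  have h2 := ProbabilityTheory.measure_ge_le_exp_mul_mgf (μ := Measure.pi ν)
    (X := fun S => g S - M) (t := s) t hs0 (bdd_integrable (by fun_prop) (exp (|s| * (B + |M|)))
      fun S => by
        rw [abs_of_pos (exp_pos _)]
        apply exp_le_exp.2
        refine (le_abs_self _).trans ?_
        rw [abs_mul]
        gcongr
        exact (abs_sub _ _).trans (by gcongr; exact hB S))
  calc _ ≤ (Measure.pi ν).real {S | t ≤ g S - M} := by
        apply measureReal_mono (fun S (hS : t ≤ g S) => ?_)
        show t ≤ g S - M
        linarith
    _ ≤ _ := h2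
    _ ≤ exp (-s * t) * exp (s ^ 2 * c ^ 2 * Fintype.card ι / 8) := by
        gcongr
        exact h1
    _ = _ := by
        rw [← exp_add, hs]
        congr 1
        field_simp
        ring

lemma avg_abs {ι : Type*} [Fintype ι] [Nonempty ι] (x : ι → ℝ) (b : ℝ) (h : ∀ k, |x k| ≤ b) :
    |(Fintype.card ι : ℝ)⁻¹ * ∑ k, x k| ≤ b := by
  have hN : (0 : ℝ) < Fintype.card ι := by exact_mod_cast Fintype.card_pos
  rw [abs_mul, abs_of_pos (inv_pos.2 hN), inv_mul_le_iff₀ hN]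
  calc _ ≤ ∑ k, |x k| := Finset.abs_sum_le_sum_abs _ _
    _ ≤ ∑ _k : ι, b := Finset.sum_le_sum fun k _ => h k
    _ = _ := by simp

lemma bddA (u : ℕ → ℝ) (B : ℝ) (h : ∀ q, |u q| ≤ B) : BddAbove (Set.range u) :=
  ⟨B, by rintro _ ⟨q, rfl⟩; exact (abs_le.1 (h q)).2⟩

lemma sup_abs (u : ℕ → ℝ) (B : ℝ) (h : ∀ q, |u q| ≤ B) : |⨆ q, u q| ≤ B :=
  abs_le.2 ⟨(abs_le.1 (h 0)).1.trans (le_ciSup (bddA u B h) 0),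
    ciSup_le fun q => (abs_le.1 (h q)).2⟩

lemma sup_diff (u v : ℕ → ℝ) (B c : ℝ) (hu : ∀ q, |u q| ≤ B) (hv : ∀ q, |v q| ≤ B)
    (h : ∀ q, |u q - v q| ≤ c) : |(⨆ q, u q) - ⨆ q, v q| ≤ c := by
  rw [abs_le]
  constructor
  · have : ⨆ q, v q ≤ (⨆ q, u q) + c := ciSup_le fun q => by
      have h1 := (abs_le.1 (h q)).1
      have h2 := le_ciSup (bddA u B hu) q
      linarith
    linarith
  · have : ⨆ q, u q ≤ (⨆ q, v q) + c := ciSup_le fun q => by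
      have h1 := (abs_le.1 (h q)).2
      have h2 := le_ciSup (bddA v B hv) q
      linarith
    linarith

lemma abs_sgn (b : Bool) : |sgn b| = 1 := by cases b <;> simp [sgn]

lemma sgn_not (b : Bool) : sgn (!b) = - sgn b := by cases b <;> simp [sgn]

/-- supremum of signed averages -/
def Rs {ι Z : Type*} [Fintype ι] (φ : ℕ → Z → ℝ) (σ : ι → Bool) (S : ι → Z) : ℝ :=
  ⨆ q, (Fintype.card ι : ℝ)⁻¹ * ∑ k, sgn (σ k) * φ q (S k)

/-- supremum of deviations -/
def Dev {ι Z : Type*} [Fintype ι] (φ : ℕ → Z → ℝ) (a : ℕ → ι → ℝ) (S : ι → Z) : ℝ :=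
  ⨆ q, (Fintype.card ι : ℝ)⁻¹ * ∑ k, (a q k - φ q (S k))

section
variable {ι Z : Type*} [Fintype ι] [DecidableEq ι] [Nonempty ι] [MeasurableSpace Z]

lemma mp_swap (ν : ι → Measure Z) [∀ i, IsProbabilityMeasure (ν i)] (σ : ι → Bool) :
    MeasurePreserving (fun p : (ι → Z) × (ι → Z) =>
      ((fun k => if σ k then p.1 k else p.2 k), (fun k => if σ k then p.2 k else p.1 k)))
      ((Measure.pi ν).prod (Measure.pi ν)) ((Measure.pi ν).prod (Measure.pi ν)) := by
  have h1 := measurePreserving_arrowProdEquivProdArrow Z Z ι ν ν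
  have h2 : MeasurePreserving (fun (T : ι → Z × Z) k => (if σ k then id else Prod.swap) (T k))
      (Measure.pi fun i => (ν i).prod (ν i)) (Measure.pi fun i => (ν i).prod (ν i)) := by
    refine measurePreserving_pi (fun i => (ν i).prod (ν i)) (fun i => (ν i).prod (ν i))
      (f := fun k => if σ k then id else Prod.swap) fun k => ?_
    by_cases h : σ k
    · simp only [h, if_true]; exact MeasurePreserving.id _
    · simp only [h]; exact Measure.measurePreserving_swap
  have h3 := (h1.comp h2).comp h1.symm
  convert h3 using 1
  ext p k
  · by_cases h : σ k <;>
      simp [h, MeasurableEquiv.arrowProdEquivProdArrow, Equiv.arrowProdEquivProdArrow]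
  · by_cases h : σ k <;>
      simp [h, MeasurableEquiv.arrowProdEquivProdArrow, Equiv.arrowProdEquivProdArrow]

lemma unit_sub {a b : ℝ} (ha : a ∈ Set.Icc (0:ℝ) 1) (hb : b ∈ Set.Icc (0:ℝ) 1) : |a - b| ≤ 1 :=
  abs_le.2 ⟨by linarith [ha.1, hb.2], by linarith [ha.2, hb.1]⟩

variable {φ : ℕ → Z → ℝ} (hφm : ∀ q, Measurable (φ q)) (hφ : ∀ q z, φ q z ∈ Set.Icc (0 : ℝ) 1)

lemma sgn_mul_abs (b : Bool) {x c : ℝ} (h : |x| ≤ c) : |sgn b * x| ≤ c := by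
  rw [abs_mul, abs_sgn, one_mul]; exact h

lemma phi_abs (hφ : ∀ q z, φ q z ∈ Set.Icc (0 : ℝ) 1) (q : ℕ) (z : Z) : |φ q z| ≤ 1 :=
  abs_le.2 ⟨by linarith [(hφ q z).1], (hφ q z).2⟩

lemma Rs_meas (hφm : ∀ q, Measurable (φ q)) (σ : ι → Bool) : Measurable (Rs (ι := ι) φ σ) := by
  unfold Rs
  refine Measurable.iSup fun q => ?_
  have := hφm q
  fun_prop

lemma Rs_abs (hφ : ∀ q z, φ q z ∈ Set.Icc (0 : ℝ) 1) (σ : ι → Bool) (S : ι → Z) :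
    |Rs φ σ S| ≤ 1 :=
  sup_abs _ _ fun q => avg_abs _ _ fun k => sgn_mul_abs _ (phi_abs hφ q _)

lemma Dev_meas (hφm : ∀ q, Measurable (φ q)) (a : ℕ → ι → ℝ) : Measurable (Dev φ a) := by
  unfold Dev
  refine Measurable.iSup fun q => ?_
  have := hφm q
  fun_prop

lemma Dev_abs (hφ : ∀ q z, φ q z ∈ Set.Icc (0 : ℝ) 1) (a : ℕ → ι → ℝ)
    (ha : ∀ q k, a q k ∈ Set.Icc (0 : ℝ) 1) (S : ι → Z) : |Dev φ a S| ≤ 1 :=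
  sup_abs _ _ fun q => avg_abs _ _ fun k => unit_sub (ha q k) (hφ q _)

lemma avg_update (x y : ι → ℝ) (i : ι) (h : ∀ k, k ≠ i → x k = y k) (hi : |x i - y i| ≤ 1) :
    |(Fintype.card ι : ℝ)⁻¹ * ∑ k, x k - (Fintype.card ι : ℝ)⁻¹ * ∑ k, y k|
      ≤ (Fintype.card ι : ℝ)⁻¹ := by
  have hN : (0 : ℝ) < Fintype.card ι := by exact_mod_cast Fintype.card_pos
  rw [← mul_sub, ← Finset.sum_sub_distrib, Finset.sum_eq_single i
    (fun k _ hk => by rw [h k hk, sub_self]) (by simp), abs_mul, abs_of_pos (inv_pos.2 hN)]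
  exact mul_le_of_le_one_right (inv_pos.2 hN).le hi

lemma Rs_diff (hφ : ∀ q z, φ q z ∈ Set.Icc (0 : ℝ) 1) (σ : ι → Bool) (S : ι → Z) (i : ι) (z : Z) :
    |Rs φ σ (Function.update S i z) - Rs φ σ S| ≤ (Fintype.card ι : ℝ)⁻¹ := by
  refine sup_diff _ _ 1 _ (fun q => avg_abs _ _ fun k => sgn_mul_abs _ (phi_abs hφ q _))
    (fun q => avg_abs _ _ fun k => sgn_mul_abs _ (phi_abs hφ q _)) fun q => ?_
  refine avg_update _ _ i (fun k hk => by rw [Function.update_of_ne hk]) ?_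
  rw [← mul_sub]
  exact sgn_mul_abs _ (unit_sub (hφ _ _) (hφ _ _))

lemma Dev_diff (hφ : ∀ q z, φ q z ∈ Set.Icc (0 : ℝ) 1) (a : ℕ → ι → ℝ)
    (ha : ∀ q k, a q k ∈ Set.Icc (0 : ℝ) 1) (S : ι → Z) (i : ι) (z : Z) :
    |Dev φ a (Function.update S i z) - Dev φ a S| ≤ (Fintype.card ι : ℝ)⁻¹ := by
  refine sup_diff _ _ 1 _ (fun q => avg_abs _ _ fun k => unit_sub (ha q k) (hφ q _))
    (fun q => avg_abs _ _ fun k => unit_sub (ha q k) (hφ q _)) fun q => ?_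
  refine avg_update _ _ i (fun k hk => by rw [Function.update_of_ne hk]) ?_
  rw [sub_sub_sub_cancel_left]
  exact unit_sub (hφ _ _) (hφ _ _)

/-- average of Rs over signs -/
def Rav (φ : ℕ → Z → ℝ) (S : ι → Z) : ℝ := (∑ σ : ι → Bool, Rs φ σ S) / 2 ^ Fintype.card ι

lemma boolsum_abs (x : (ι → Bool) → ℝ) (b : ℝ) (h : ∀ σ, |x σ| ≤ b) :
    |(∑ σ, x σ) / 2 ^ Fintype.card ι| ≤ b := by
  rw [abs_div, abs_of_pos (show (0:ℝ) < 2 ^ Fintype.card ι by positivity), div_le_iff₀ (by positivity)]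
  calc _ ≤ ∑ k, |x k| := Finset.abs_sum_le_sum_abs _ _
    _ ≤ ∑ _k : ι → Bool, b := Finset.sum_le_sum fun k _ => h k
    _ = _ := by simp [mul_comm]

lemma Rav_abs (hφ : ∀ q z, φ q z ∈ Set.Icc (0 : ℝ) 1) (S : ι → Z) : |Rav φ S| ≤ 1 :=
  boolsum_abs _ _ fun σ => Rs_abs hφ σ S

lemma Rav_diff (hφ : ∀ q z, φ q z ∈ Set.Icc (0 : ℝ) 1) (S : ι → Z) (i : ι) (z : Z) :
    |Rav φ (Function.update S i z) - Rav φ S| ≤ (Fintype.card ι : ℝ)⁻¹ := by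
  unfold Rav
  rw [← sub_div, ← Finset.sum_sub_distrib]
  exact boolsum_abs _ _ fun σ => Rs_diff hφ σ S i z

lemma Rav_meas (hφm : ∀ q, Measurable (φ q)) : Measurable (Rav (ι := ι) φ) := by
  unfold Rav
  have := fun σ : ι → Bool => Rs_meas hφm σ
  fun_prop

lemma symmetrization (hφm : ∀ q, Measurable (φ q)) (hφ : ∀ q z, φ q z ∈ Set.Icc (0 : ℝ) 1)
    (ν : ι → Measure Z) [∀ i, IsProbabilityMeasure (ν i)] :
    ∫ S, Dev φ (fun q k => ∫ z, φ q z ∂ν k) S ∂Measure.pi ν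
      ≤ 2 * ∫ S, Rav φ S ∂Measure.pi ν := by
  set pik := Measure.pi ν with hpik
  have ha : ∀ q k, (∫ z, φ q z ∂ν k) ∈ Set.Icc (0 : ℝ) 1 := fun q k => by
    refine ⟨integral_nonneg fun z => (hφ q z).1, ?_⟩
    have := norm_integral_le_of_norm_le_const (μ := ν k) (f := φ q) (C := 1)
      (ae_of_all _ fun z => phi_abs hφ q z)
    simp only [probReal_univ, mul_one] at this
    exact (le_abs_self _).trans this
  let D : (ι → Bool) → (ι → Z) × (ι → Z) → ℝ := fun σ p =>
    ⨆ q, (Fintype.card ι : ℝ)⁻¹ * ∑ k, sgn (σ k) * (φ q (p.2 k) - φ q (p.1 k))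
  have hDm : ∀ σ, Measurable (D σ) := fun σ => by
    refine Measurable.iSup fun q => ?_
    have := hφm q
    fun_prop
  have hDb : ∀ (σ : ι → Bool) (p : (ι → Z) × (ι → Z)) (q : ℕ), |(Fintype.card ι : ℝ)⁻¹ *
      ∑ k, sgn (σ k) * (φ q (p.2 k) - φ q (p.1 k))| ≤ 1 := fun σ p q =>
    avg_abs _ _ fun k => sgn_mul_abs _ (unit_sub (hφ _ _) (hφ _ _))
  have hD1 : ∀ σ p, |D σ p| ≤ 1 := fun σ p => sup_abs _ _ fun q => hDb σ p q
  let τ : ι → Bool := fun _ => true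
  have s1 : ∀ S, Dev φ (fun q k => ∫ z, φ q z ∂ν k) S ≤ ∫ S', D τ (S, S') ∂pik := fun S => by
    refine ciSup_le fun q => ?_
    have hq := hφm q
    have e1 : (Fintype.card ι : ℝ)⁻¹ * ∑ k, ((∫ z, φ q z ∂ν k) - φ q (S k))
        = ∫ S', (Fintype.card ι : ℝ)⁻¹ * ∑ k, sgn (τ k) * (φ q (S' k) - φ q (S k)) ∂pik := by
      have hIntg : ∀ k, Integrable (fun S' : ι → Z => φ q (S' k)) pik := fun k =>
        bdd_integrable (by fun_prop) 1 fun S' => phi_abs hφ q _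
      rw [integral_const_mul, integral_finsetSum]
      · congr 1
        refine Finset.sum_congr rfl fun k _ => ?_
        simp only [τ, sgn, if_true, one_mul]
        rw [integral_sub (hIntg k) (integrable_const _),
          mp_integral (measurePreserving_eval ν k) hq]
        simp
      · intro k _
        exact ((hIntg k).sub (integrable_const _)).const_mul _
    rw [e1]
    refine integral_mono (bdd_integrable (by fun_prop) 1 fun S' => hDb τ (S, S') q)
      (bdd_integrable ((hDm τ).comp measurable_prodMk_left) 1 fun S' => hD1 _ _) fun S' => ?_
    exact le_ciSup (bddA _ 1 (hDb τ (S, S'))) q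
  have s2 : ∫ S, Dev φ (fun q k => ∫ z, φ q z ∂ν k) S ∂pik ≤ ∫ p, D τ p ∂(pik.prod pik) := by
    have hi := bdd_integrable (μ := pik.prod pik) (hDm τ) 1 (hD1 τ)
    rw [integral_prod _ hi]
    exact integral_mono (bdd_integrable (Dev_meas hφm _) 1 (Dev_abs hφ _ ha))
      hi.integral_prod_left s1
  have s3 : ∀ σ, ∫ p, D τ p ∂(pik.prod pik) = ∫ p, D σ p ∂(pik.prod pik) := fun σ => by
    rw [← mp_integral (mp_swap ν σ) (hDm τ)]
    congr 1
    ext p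
    simp only [D]
    congr 1
    ext q
    congr 1
    refine Finset.sum_congr rfl fun k _ => ?_
    by_cases h : σ k <;> simp [h, τ, sgn]
  have hRi : ∀ σ : ι → Bool, Integrable (Rs φ σ) pik := fun σ =>
    bdd_integrable (Rs_meas hφm σ) 1 (Rs_abs hφ σ)
  have s4 : ∀ σ, ∫ p, D σ p ∂(pik.prod pik)
      ≤ ∫ S, Rs φ σ S ∂pik + ∫ S, Rs φ (fun k => !σ k) S ∂pik := fun σ => by
    have i1 : Integrable (fun p : (ι → Z) × (ι → Z) => Rs φ σ p.2) (pik.prod pik) :=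
      bdd_integrable ((Rs_meas hφm _).comp measurable_snd) 1 fun _ => Rs_abs hφ _ _
    have i2 : Integrable (fun p : (ι → Z) × (ι → Z) => Rs φ (fun k => !σ k) p.1) (pik.prod pik) :=
      bdd_integrable ((Rs_meas hφm _).comp measurable_fst) 1 fun _ => Rs_abs hφ _ _
    rw [← mp_integral (measurePreserving_snd (μ := pik) (ν := pik)) (Rs_meas hφm σ),
      ← mp_integral (measurePreserving_fst (μ := pik) (ν := pik)) (Rs_meas hφm (fun k => !σ k)),
      ← integral_add i1 i2]
    refine integral_mono (bdd_integrable (hDm σ) 1 (hD1 σ)) (i1.add i2) fun p => ?_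
    refine ciSup_le fun q => ?_
    have b1 := le_ciSup (bddA (fun q => (Fintype.card ι : ℝ)⁻¹ * ∑ k, sgn (σ k) * φ q (p.2 k)) 1
      fun q => avg_abs _ _ fun k => sgn_mul_abs _ (phi_abs hφ q _)) q
    have b2 := le_ciSup (bddA (fun q => (Fintype.card ι : ℝ)⁻¹ * ∑ k, sgn (!σ k) * φ q (p.1 k)) 1
      fun q => avg_abs _ _ fun k => sgn_mul_abs _ (phi_abs hφ q _)) q
    refine le_trans (le_of_eq ?_) (add_le_add b1 b2)
    simp only
    rw [← mul_add, ← Finset.sum_add_distrib]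
    congr 1
    refine Finset.sum_congr rfl fun k _ => ?_
    rw [sgn_not]; ring
  have hneg : ∑ σ : ι → Bool, ∫ S, Rs φ (fun k => !σ k) S ∂pik
      = ∑ σ : ι → Bool, ∫ S, Rs φ σ S ∂pik := by
    refine Function.Bijective.sum_comp (e := fun (σ : ι → Bool) k => !σ k) ?_
      (fun σ => ∫ S, Rs φ σ S ∂pik)
    exact Function.Involutive.bijective fun σ => by ext; simp
  have s5 : (2:ℝ) ^ Fintype.card ι * ∫ p, D τ p ∂(pik.prod pik)
      ≤ 2 * ∑ σ : ι → Bool, ∫ S, Rs φ σ S ∂pik := by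
    calc _ = ∑ _σ : ι → Bool, ∫ p, D τ p ∂(pik.prod pik) := by simp
      _ ≤ ∑ σ : ι → Bool, (∫ S, Rs φ σ S ∂pik + ∫ S, Rs φ (fun k => !σ k) S ∂pik) :=
        Finset.sum_le_sum fun σ _ => (s3 σ).trans_le (s4 σ)
      _ = _ := by rw [Finset.sum_add_distrib, hneg]; ring
  have e6 : ∫ S, Rav φ S ∂pik = (∑ σ : ι → Bool, ∫ S, Rs φ σ S ∂pik) / 2 ^ Fintype.card ι := by
    unfold Rav
    rw [integral_div, integral_finsetSum _ fun σ _ => hRi σ]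
  rw [e6]
  refine s2.trans ?_
  rw [← mul_div_assoc, le_div_iff₀ (by positivity), mul_comm]
  exact s5

lemma uniform_bound (hφm : ∀ q, Measurable (φ q)) (hφ : ∀ q z, φ q z ∈ Set.Icc (0 : ℝ) 1)
    (ν : ι → Measure Z) [∀ i, IsProbabilityMeasure (ν i)] (δ : ℝ) (hδ0 : 0 < δ) (hδ1 : δ < 1) :
    ENNReal.ofReal (1 - δ) ≤ Measure.pi ν {S | ∀ q,
      (Fintype.card ι : ℝ)⁻¹ * ∑ k, ((∫ z, φ q z ∂ν k) - φ q (S k)) ≤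
        2 * Rav φ S + 3 * Real.sqrt (Real.log (2 / δ) / (2 * Fintype.card ι))} := by
  have hN : (0 : ℝ) < Fintype.card ι := by exact_mod_cast Fintype.card_pos
  set t := 3 * Real.sqrt (Real.log (2 / δ) / (2 * Fintype.card ι)) with ht
  have ha : ∀ q k, (∫ z, φ q z ∂ν k) ∈ Set.Icc (0 : ℝ) 1 := fun q k => by
    refine ⟨integral_nonneg fun z => (hφ q z).1, ?_⟩
    have := norm_integral_le_of_norm_le_const (μ := ν k) (f := φ q) (C := 1)
      (ae_of_all _ fun z => phi_abs hφ q z)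
    simp only [probReal_univ, mul_one] at this
    exact (le_abs_self _).trans this
  set a : ℕ → ι → ℝ := fun q k => ∫ z, φ q z ∂ν k with hadef
  let g : (ι → Z) → ℝ := fun S => Dev φ a S - 2 * Rav φ S
  have hgm : Measurable g := (Dev_meas hφm a).sub ((Rav_meas hφm).const_mul 2)
  have hgE : ∫ S, g S ∂Measure.pi ν ≤ 0 := by
    simp only [g]
    rw [integral_sub (bdd_integrable (Dev_meas hφm _) 1 (Dev_abs hφ _ ha))
      ((bdd_integrable (Rav_meas hφm) 1 (Rav_abs hφ)).const_mul 2), integral_const_mul]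
    linarith [symmetrization hφm hφ ν]
  have htail := mcd_tail (3 * (Fintype.card ι : ℝ)⁻¹) t Fintype.card_pos (by positivity)
    (by positivity) ν g hgm 3 (fun S => by
      have h1 := abs_le.1 (Dev_abs hφ a ha S)
      have h2 := abs_le.1 (Rav_abs hφ S)
      simp only [g]
      exact abs_le.2 ⟨by linarith, by linarith⟩) (fun S i z => by
      have h1 := abs_le.1 (Dev_diff hφ a ha S i z)
      have h2 := abs_le.1 (Rav_diff hφ S i z)
      simp only [g]
      exact abs_le.2 ⟨by linarith, by linarith⟩) hgE
  have hlog : 0 ≤ Real.log (2 / δ) := Real.log_nonneg (by rw [le_div_iff₀ hδ0]; linarith)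
  have hexp : exp (- 2 * t ^ 2 / ((3 * (Fintype.card ι : ℝ)⁻¹) ^ 2 * Fintype.card ι)) = δ / 2 := by
    have : - 2 * t ^ 2 / ((3 * (Fintype.card ι : ℝ)⁻¹) ^ 2 * Fintype.card ι)
        = - Real.log (2 / δ) := by
      rw [ht, mul_pow, Real.sq_sqrt (by positivity)]
      field_simp
    rw [this, exp_neg, exp_log (by positivity), inv_div]
  rw [hexp] at htail
  have hms : MeasurableSet {S | t ≤ g S} := measurableSet_le measurable_const hgm
  have hcompl := probReal_compl_eq_one_sub (μ := Measure.pi ν) hms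
  calc ENNReal.ofReal (1 - δ) ≤ ENNReal.ofReal ((Measure.pi ν).real {S | t ≤ g S}ᶜ) :=
        ENNReal.ofReal_le_ofReal (by rw [hcompl]; linarith)
    _ = Measure.pi ν {S | t ≤ g S}ᶜ := ofReal_measureReal
    _ ≤ _ := by
        refine measure_mono fun S hS q => ?_
        have hS' : g S < t := not_le.1 hS
        have := le_ciSup (bddA (fun q => (Fintype.card ι : ℝ)⁻¹ * ∑ k, (a q k - φ q (S k))) 1
          fun q => avg_abs _ _ fun k => unit_sub (ha q k) (hφ q _)) q
        simp only [g, Dev] at hS'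
        linarith

end

/-- For `n` independent (not necessarily identical) domains
`P⁽¹⁾, …, P⁽ⁿ⁾`, each providing `m` i.i.d. samples, with confidence at least `1 - δ`,
simultaneously for all `f ∈ F`:
`(1/n) ∑ⱼ L_{P⁽ʲ⁾}(f) ≤ (1/n) ∑ⱼ L̂_{P⁽ʲ⁾}(f) + 2 R_{mn}(F) + 3 √(ln(2/δ)/(2mn))`. -/
theorem statement1 {X : Type*} [MeasurableSpace X]
    (ℓ : Ysp → Ysp → ℝ) (hℓ01 : ∀ a b, ℓ a b ∈ Set.Icc (0 : ℝ) 1)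
    (hℓLip : LipschitzWith 1 fun p : Ysp × Ysp => ℓ p.1 p.2)
    (F : Set (X → Ysp)) (hFcount : F.Countable) (hFmeas : ∀ f ∈ F, Measurable f)
    (n m : ℕ) (hn : 0 < n) (hm : 0 < m)
    (P : Fin n → Measure (X × Ysp)) [∀ j, IsProbabilityMeasure (P j)]
    (δ : ℝ) (hδ0 : 0 < δ) (hδ1 : δ < 1) :
    ENNReal.ofReal (1 - δ) ≤
      (Measure.pi fun p : Fin n × Fin m => P p.1) {S | ∀ f ∈ F,
        (n : ℝ)⁻¹ * ∑ j, risk ℓ (P j) f ≤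
          (n : ℝ)⁻¹ * ∑ j, ((m : ℝ)⁻¹ * ∑ i, ℓ (f (S (j, i)).1) (S (j, i)).2)
            + 2 * rad ℓ F S
            + 3 * Real.sqrt (Real.log (2 / δ) / (2 * m * n))} := by
  rcases F.eq_empty_or_nonempty with rfl | hne
  · simp only [Set.mem_empty_iff_false, false_imp_iff, implies_true, Set.ofPred_true, measure_univ]
    exact ENNReal.ofReal_le_one.2 (by linarith)
  obtain ⟨e, rfl⟩ := hFcount.exists_eq_range hne
  have : Nonempty (Fin n × Fin m) := ⟨(⟨0, hn⟩, ⟨0, hm⟩)⟩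
  have hn' : (0 : ℝ) < n := by exact_mod_cast hn
  have hm' : (0 : ℝ) < m := by exact_mod_cast hm
  let φ : ℕ → X × Ysp → ℝ := fun q z => ℓ (e q z.1) z.2
  have hφm : ∀ q, Measurable (φ q) := fun q => by
    have h1 : Measurable (fun p : Ysp × Ysp => ℓ p.1 p.2) := measurable_of_countable _
    have h2 := hFmeas (e q) ⟨q, rfl⟩
    exact h1.comp ((h2.comp measurable_fst).prodMk measurable_snd)
  have hφ : ∀ q z, φ q z ∈ Set.Icc (0 : ℝ) 1 := fun q z => hℓ01 _ _
  refine (uniform_bound hφm hφ (fun p : Fin n × Fin m => P p.1) δ hδ0 hδ1).trans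
    (measure_mono fun S hS => ?_)
  rintro _ ⟨q, rfl⟩
  have h := hS q
  have hrad : Rav φ S ≤ rad ℓ (Set.range e) S := by
    unfold Rav rad
    gcongr with σ
    refine ciSup_le fun q => ?_
    have hb : ∀ f : X → Ysp, |(Fintype.card (Fin n × Fin m) : ℝ)⁻¹ *
        ∑ k, sgn (σ k) * ℓ (f (S k).1) (S k).2| ≤ 1 := fun f =>
      avg_abs _ _ fun k => sgn_mul_abs _
        (abs_le.2 ⟨by linarith [(hℓ01 (f (S k).1) (S k).2).1], (hℓ01 _ _).2⟩)
    refine le_ciSup_of_le ⟨1, ?_⟩ (e q) ?_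
    · rintro _ ⟨f, rfl⟩
      exact Real.iSup_le (fun _ => (abs_le.1 (hb f)).2) zero_le_one
    · have hq : e q ∈ Set.range e := ⟨q, rfl⟩
      have : Nonempty (e q ∈ Set.range e) := ⟨hq⟩
      simp only [ciSup_const]
      exact le_rfl
  have hcard : (Fintype.card (Fin n × Fin m) : ℝ) = n * m := by simp
  have e1 : (Fintype.card (Fin n × Fin m) : ℝ)⁻¹ *
      ∑ k : Fin n × Fin m, ((∫ z, φ q z ∂P k.1) - φ q (S k))
      = (n : ℝ)⁻¹ * ∑ j, risk ℓ (P j) (e q) -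
        (n : ℝ)⁻¹ * ∑ j, ((m : ℝ)⁻¹ * ∑ i, ℓ (e q (S (j, i)).1) (S (j, i)).2) := by
    rw [hcard, Finset.sum_sub_distrib, Fintype.sum_prod_type, Fintype.sum_prod_type,
      ← Finset.mul_sum]
    simp only [Finset.sum_const, Finset.card_univ, Fintype.card_fin, nsmul_eq_mul,
      ← Finset.mul_sum]
    simp only [φ, risk]
    field_simp
  rw [e1, hcard, show (2 * ((n : ℝ) * m)) = 2 * m * n by ring] at h
  linarith
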